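/- arXiv:1306.5014 — 3 statements merged into one kernel-verified Lean document; each statement's English description precedes it below -/
import Mathlib

section
/- Suppose f : ℝ → ℝ is continuous on [a,b] (with a < b), maps [a,b] into [a,b], and there is C ∈ (a,b) such that f is strictly increasing on [a,C] and strictly decreasing on [C,b]. If the l-th iterate f^[l] has a local extremum at a point x ∈ (a,b) relative to [a,b], then the (l+1)-st iterate f^[l+1] also has a local extremum at x relative to [a,b]. Consequently (by induction), for every q ≥ l, the iterate f^[q] has a local extremum at x relative to [a,b]. -/
/-- For a continuous unimodal map `f` of `[a,b]` into itself (strictly increasing on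
`[a,C]`, strictly decreasing on `[C,b]`), if `f^[l]` has a local extremum at
`x ∈ (a,b)` relative to `[a,b]`, then so does `f^[l+1]`, and hence so does `f^[q]`
for every `q ≥ l`. -/
theorem extrema_of_iterates_persist (f : ℝ → ℝ) (a b C : ℝ) (hab : a < b)
    (hC : C ∈ Set.Ioo a b)
    (hcont : ContinuousOn f (Set.Icc a b))
    (hmaps : Set.MapsTo f (Set.Icc a b) (Set.Icc a b))
    (hinc : StrictMonoOn f (Set.Icc a C))
    (hdec : StrictAntiOn f (Set.Icc C b))
    (l : ℕ) (x : ℝ) (hx : x ∈ Set.Ioo a b)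
    (hext : IsLocalMaxOn (f^[l]) (Set.Icc a b) x ∨ IsLocalMinOn (f^[l]) (Set.Icc a b) x) :
    (IsLocalMaxOn (f^[l + 1]) (Set.Icc a b) x ∨ IsLocalMinOn (f^[l + 1]) (Set.Icc a b) x) ∧
    (∀ q : ℕ, l ≤ q →
      IsLocalMaxOn (f^[q]) (Set.Icc a b) x ∨ IsLocalMinOn (f^[q]) (Set.Icc a b) x) := by
  have step : ∀ n : ℕ,
      (IsLocalMaxOn (f^[n]) (Set.Icc a b) x ∨ IsLocalMinOn (f^[n]) (Set.Icc a b) x) →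
      (IsLocalMaxOn (f^[n + 1]) (Set.Icc a b) x ∨
        IsLocalMinOn (f^[n + 1]) (Set.Icc a b) x) := by
    intro n hn
    have hxm : x ∈ Set.Icc a b := ⟨hx.1.le, hx.2.le⟩
    have hg : ContinuousOn (f^[n]) (Set.Icc a b) := hcont.iterate hmaps n
    have hgm : Set.MapsTo (f^[n]) (Set.Icc a b) (Set.Icc a b) := hmaps.iterate n
    have hc := hg x hxm
    have hy := hgm hxm
    have hmem : ∀ᶠ z in nhdsWithin x (Set.Icc a b), z ∈ Set.Icc a b := self_mem_nhdsWithin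
    unfold IsLocalMaxOn IsLocalMinOn IsMaxFilter IsMinFilter at *
    simp only [Function.iterate_succ_apply']
    rcases lt_trichotomy (f^[n] x) C with h | h | h
    · have hlt := hc.eventually (gt_mem_nhds h)
      rcases hn with hn | hn
      · left
        filter_upwards [hlt, hn, hmem] with z h1 h2 h3
        exact hinc.monotoneOn ⟨(hgm h3).1, h1.le⟩ ⟨hy.1, h.le⟩ h2
      · right
        filter_upwards [hlt, hn, hmem] with z h1 h2 h3
        exact hinc.monotoneOn ⟨hy.1, h.le⟩ ⟨(hgm h3).1, h1.le⟩ h2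
    · left
      filter_upwards [hmem] with z h3
      rw [h]
      have hz := hgm h3
      rcases le_total (f^[n] z) C with h4 | h4
      · exact hinc.monotoneOn ⟨hz.1, h4⟩ ⟨hC.1.le, le_rfl⟩ h4
      · exact hdec.antitoneOn ⟨le_rfl, hC.2.le⟩ ⟨h4, hz.2⟩ h4
    · have hlt := hc.eventually (lt_mem_nhds h)
      rcases hn with hn | hn
      · right
        filter_upwards [hlt, hn, hmem] with z h1 h2 h3
        exact hdec.antitoneOn ⟨h1.le, (hgm h3).2⟩ ⟨h.le, hy.2⟩ h2
      · left
        filter_upwards [hlt, hn, hmem] with z h1 h2 h3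
        exact hdec.antitoneOn ⟨h.le, hy.2⟩ ⟨h1.le, (hgm h3).2⟩ h2
  refine ⟨step l hext, fun q hq => ?_⟩
  induction q, hq using Nat.le_induction with
  | base => exact hext
  | succ k _ ih => exact step k ih
end

section
/- Suppose f : ℝ → ℝ is continuous on [a,b] (with a < b), maps [a,b] into [a,b], and there is C ∈ (a,b) such that f is strictly increasing on [a,C] and strictly decreasing on [C,b]. Let q ≥ 1. If the iterate f^[q] has a local extremum at a point x ∈ (a,b) relative to [a,b], then there exists an index i with 0 ≤ i ≤ q−1 such that f^[i](x) = C. (Location part of the paper's lemma on coordinates of the extrema of f^q.) -/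
/-- For a continuous unimodal map `f` of `[a,b]` into itself (strictly increasing on
`[a,C]`, strictly decreasing on `[C,b]`), if `f^[q]` (with `q ≥ 1`) has a local
extremum at `x ∈ (a,b)` relative to `[a,b]`, then `f^[i] x = C` for some
`0 ≤ i ≤ q - 1`. -/
theorem extremum_iterate_hits_critical (f : ℝ → ℝ) (a b C : ℝ) (hab : a < b)
    (hC : C ∈ Set.Ioo a b)
    (hcont : ContinuousOn f (Set.Icc a b))
    (hmaps : Set.MapsTo f (Set.Icc a b) (Set.Icc a b))
    (hinc : StrictMonoOn f (Set.Icc a C))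
    (hdec : StrictAntiOn f (Set.Icc C b))
    (q : ℕ) (hq : 1 ≤ q) (x : ℝ) (hx : x ∈ Set.Ioo a b)
    (hext : IsLocalMaxOn (f^[q]) (Set.Icc a b) x ∨ IsLocalMinOn (f^[q]) (Set.Icc a b) x) :
    ∃ i : ℕ, i ≤ q - 1 ∧ f^[i] x = C := by
  by_contra hne
  push Not at hne
  have hIcc : Set.Icc a b ∈ nhds x := Icc_mem_nhds hx.1 hx.2
  have hm : ∀ n, Set.MapsTo (f^[n]) (Set.Icc a b) (Set.Icc a b) := fun n => hmaps.iterate n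
  have hc : ∀ n, ContinuousOn (f^[n]) (Set.Icc a b) := fun n => hcont.iterate hmaps n
  have key : ∀ n, n ≤ q → ∃ s ∈ nhds x, StrictMonoOn (f^[n]) s ∨ StrictAntiOn (f^[n]) s := by
    intro n
    induction n with
    | zero =>
      intro _
      exact ⟨Set.univ, Filter.univ_mem, Or.inl (fun y _ z _ h => by simpa using h)⟩
    | succ n ih =>
      intro hn
      obtain ⟨s, hs, hmono⟩ := ih (by omega)
      have hcn : ContinuousAt (f^[n]) x := (hc n).continuousAt hIcc
      rw [Function.iterate_succ']
      rcases lt_or_gt_of_ne (hne n (by omega)) with h | h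
      · have h1 : (f^[n]) ⁻¹' Set.Iio C ∈ nhds x := hcn (Iio_mem_nhds h)
        refine ⟨s ∩ (Set.Icc a b ∩ (f^[n]) ⁻¹' Set.Iio C),
          Filter.inter_mem hs (Filter.inter_mem hIcc h1), ?_⟩
        have hmp : Set.MapsTo (f^[n]) (s ∩ (Set.Icc a b ∩ (f^[n]) ⁻¹' Set.Iio C))
            (Set.Icc a C) := fun y hy => ⟨(hm n hy.2.1).1, le_of_lt hy.2.2⟩
        rcases hmono with hh | hh
        · exact Or.inl (hinc.comp (hh.mono Set.inter_subset_left) hmp)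
        · exact Or.inr (hinc.comp_strictAntiOn (hh.mono Set.inter_subset_left) hmp)
      · have h1 : (f^[n]) ⁻¹' Set.Ioi C ∈ nhds x := hcn (Ioi_mem_nhds h)
        refine ⟨s ∩ (Set.Icc a b ∩ (f^[n]) ⁻¹' Set.Ioi C),
          Filter.inter_mem hs (Filter.inter_mem hIcc h1), ?_⟩
        have hmp : Set.MapsTo (f^[n]) (s ∩ (Set.Icc a b ∩ (f^[n]) ⁻¹' Set.Ioi C))
            (Set.Icc C b) := fun y hy => ⟨le_of_lt hy.2.2, (hm n hy.2.1).2⟩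
        rcases hmono with hh | hh
        · exact Or.inr (hdec.comp_strictMonoOn (hh.mono Set.inter_subset_left) hmp)
        · exact Or.inl (hdec.comp (hh.mono Set.inter_subset_left) hmp)
  obtain ⟨s, hs, hmono⟩ := key q le_rfl
  have hxs := mem_of_mem_nhds hs
  have hgt : ∃ᶠ y in nhds x, x < y := frequently_gt_nhds x
  have hlt : ∃ᶠ y in nhds x, y < x := frequently_lt_nhds x
  rcases hext with h | h
  · have h' : ∀ᶠ y in nhds x, f^[q] y ≤ f^[q] x := by
      have := h
      unfold IsLocalMaxOn IsMaxFilter at this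
      rwa [nhdsWithin_eq_nhds.2 hIcc] at this
    obtain ⟨y, hy, hy1, hy2⟩ := (hgt.and_eventually (h'.and hs)).exists
    obtain ⟨z, hz, hz1, hz2⟩ := (hlt.and_eventually (h'.and hs)).exists
    rcases hmono with hh | hh
    · exact absurd (hh hxs hy2 hy) (not_lt.2 hy1)
    · exact absurd (hh hz2 hxs hz) (not_lt.2 hz1)
  · have h' : ∀ᶠ y in nhds x, f^[q] x ≤ f^[q] y := by
      have := h
      unfold IsLocalMinOn IsMinFilter at this
      rwa [nhdsWithin_eq_nhds.2 hIcc] at this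
    obtain ⟨y, hy, hy1, hy2⟩ := (hgt.and_eventually (h'.and hs)).exists
    obtain ⟨z, hz, hz1, hz2⟩ := (hlt.and_eventually (h'.and hs)).exists
    rcases hmono with hh | hh
    · exact absurd (hh hz2 hxs hz) (not_lt.2 hz1)
    · exact absurd (hh hxs hy2 hy) (not_lt.2 hy1)
end

section
/- Suppose f : ℝ → ℝ is continuous on [a,b] (with a < b), there is C ∈ (a,b) such that f is strictly increasing on [a,C] and strictly decreasing on [C,b], and f(a) = a, f(b) = a, and f(C) = b (a 'full' unimodal map). Then for every natural number q, the set {x ∈ [a,b] : f^[q](x) = C} has exactly 2^q elements. (This is the counting claim used in the paper's error estimate: there are at least 2^q local extrema of f^q in [a,b], located at the preimages of the critical point.) -/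
/-- For a full continuous unimodal map of `[a,b]` (strictly increasing on `[a,C]`,
strictly decreasing on `[C,b]`, with `f a = a`, `f b = a`, `f C = b`), the set of
points of `[a,b]` mapped to the critical point `C` by `f^[q]` has exactly
`2 ^ q` elements. -/
theorem card_preimages_of_critical_point (f : ℝ → ℝ) (a b C : ℝ) (hab : a < b)
    (hC : C ∈ Set.Ioo a b)
    (hcont : ContinuousOn f (Set.Icc a b))
    (hinc : StrictMonoOn f (Set.Icc a C))
    (hdec : StrictAntiOn f (Set.Icc C b))
    (hfa : f a = a) (hfb : f b = a) (hfC : f C = b) (q : ℕ) :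
    {x ∈ Set.Icc a b | f^[q] x = C}.Finite ∧
    {x ∈ Set.Icc a b | f^[q] x = C}.ncard = 2 ^ q := by
  obtain ⟨haC, hCb⟩ := hC
  have hg : ∀ y, ∃ x, y ∈ Set.Icc a b → x ∈ Set.Icc a C ∧ f x = y := by
    intro y
    by_cases hy : y ∈ Set.Icc a b
    · have h := intermediate_value_Icc haC.le (hcont.mono (Set.Icc_subset_Icc_right hCb.le))
      rw [hfa, hfC] at h
      obtain ⟨x, hx, hxy⟩ := h hy
      exact ⟨x, fun _ => ⟨hx, hxy⟩⟩
    · exact ⟨a, fun h => absurd h hy⟩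
  have hh : ∀ y, ∃ x, y ∈ Set.Icc a b → x ∈ Set.Icc C b ∧ f x = y := by
    intro y
    by_cases hy : y ∈ Set.Icc a b
    · have h := intermediate_value_Icc' hCb.le (hcont.mono (Set.Icc_subset_Icc_left haC.le))
      rw [hfb, hfC] at h
      obtain ⟨x, hx, hxy⟩ := h hy
      exact ⟨x, fun _ => ⟨hx, hxy⟩⟩
    · exact ⟨a, fun h => absurd h hy⟩
  choose g hg using hg
  choose h hh using hh
  have hmaps : ∀ x ∈ Set.Icc a b, f x ∈ Set.Icc a b := by
    intro x hx
    rcases le_total x C with hxC | hxC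
    · have h1 := hinc.monotoneOn ⟨le_rfl, haC.le⟩ ⟨hx.1, hxC⟩ hx.1
      have h2 := hinc.monotoneOn ⟨hx.1, hxC⟩ ⟨haC.le, le_rfl⟩ hxC
      rw [hfa] at h1
      rw [hfC] at h2
      exact ⟨h1, h2⟩
    · have h1 := hdec.antitoneOn ⟨hxC, hx.2⟩ ⟨hCb.le, le_rfl⟩ hx.2
      have h2 := hdec.antitoneOn ⟨le_rfl, hCb.le⟩ ⟨hxC, hx.2⟩ hxC
      rw [hfb] at h1
      rw [hfC] at h2
      exact ⟨h1, h2⟩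
  have hbq : ∀ q, f^[q] b ≠ C := by
    intro q
    cases q with
    | zero => exact hCb.ne'
    | succ n =>
      rw [Function.iterate_succ_apply, hfb, Function.iterate_fixed hfa]
      exact haC.ne
  induction q with
  | zero =>
    have : {x ∈ Set.Icc a b | f^[0] x = C} = {C} := by
      ext x
      simp only [Set.mem_setOf_eq, Function.iterate_zero, id, Set.mem_singleton_iff]
      constructor
      · exact fun h => h.2
      · rintro rfl
        exact ⟨⟨haC.le, hCb.le⟩, rfl⟩
    rw [this]
    simp
  | succ q ih =>
    obtain ⟨hfin, hcard⟩ := ih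
    set S := {x ∈ Set.Icc a b | f^[q] x = C} with hS
    have hSI : ∀ y ∈ S, y ∈ Set.Icc a b := fun y hy => hy.1
    have hEq : {x ∈ Set.Icc a b | f^[q+1] x = C} = g '' S ∪ h '' S := by
      ext x
      constructor
      · rintro ⟨hx, hxq⟩
        rw [Function.iterate_succ_apply] at hxq
        have hfx := hmaps x hx
        rcases le_total x C with hxC | hxC
        · exact Or.inl ⟨f x, ⟨hfx, hxq⟩,
            hinc.injOn (hg _ hfx).1 ⟨hx.1, hxC⟩ (hg _ hfx).2⟩
        · exact Or.inr ⟨f x, ⟨hfx, hxq⟩,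
            hdec.injOn (hh _ hfx).1 ⟨hxC, hx.2⟩ (hh _ hfx).2⟩
      · rintro (⟨y, hy, rfl⟩ | ⟨y, hy, rfl⟩)
        · obtain ⟨h1, h2⟩ := hg y hy.1
          refine ⟨⟨h1.1, h1.2.trans hCb.le⟩, ?_⟩
          rw [Function.iterate_succ_apply, h2]
          exact hy.2
        · obtain ⟨h1, h2⟩ := hh y hy.1
          refine ⟨⟨haC.le.trans h1.1, h1.2⟩, ?_⟩
          rw [Function.iterate_succ_apply, h2]
          exact hy.2
    have hdisj : Disjoint (g '' S) (h '' S) := by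
      rw [Set.disjoint_left]
      rintro x ⟨y, hy, rfl⟩ ⟨z, hz, hzy⟩
      obtain ⟨h1, h2⟩ := hg y hy.1
      obtain ⟨h3, h4⟩ := hh z hz.1
      rw [hzy] at h3
      have : g y = C := le_antisymm h1.2 h3.1
      rw [this, hfC] at h2
      have h5 := hy.2
      rw [← h2] at h5
      exact hbq q h5
    have hgi : Set.InjOn g S := by
      intro y hy z hz hyz
      rw [← (hg y hy.1).2, hyz, (hg z hz.1).2]
    have hhi : Set.InjOn h S := by
      intro y hy z hz hyz
      rw [← (hh y hy.1).2, hyz, (hh z hz.1).2]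
    rw [hEq]
    refine ⟨(hfin.image g).union (hfin.image h), ?_⟩
    rw [Set.ncard_union_eq hdisj (hfin.image g) (hfin.image h), Set.ncard_image_of_injOn hgi,
      Set.ncard_image_of_injOn hhi, hcard]
    ring
end
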